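/- arXiv:2307.08283 — 3 statements merged into one kernel-verified Lean document; each statement's English description precedes it below -/
import Mathlib

section
/- Let n, N, m be positive integers and let X be an n×N real matrix. Then the infimum over all n×m real matrices W of the squared Frobenius reconstruction error ‖X − W Wᵀ X‖_F² (the PCA-style symmetric autoencoder loss) equals the infimum over all pairs of an n×m real matrix W₂ and an m×n real matrix W₁ of ‖X − W₂ W₁ X‖_F² (the linear autoencoder loss). That is, ⨅_{W ∈ ℝ^{n×m}} ‖X − W Wᵀ X‖_F² = ⨅_{W₂ ∈ ℝ^{n×m}, W₁ ∈ ℝ^{m×n}} ‖X − W₂ W₁ X‖_F². -/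
open Matrix BigOperators

/-- The Frobenius norm of a real matrix: the square root of the sum of the
squares of all entries. -/
noncomputable def frobeniusNorm {p q : ℕ} (A : Matrix (Fin p) (Fin q) ℝ) : ℝ :=
  Real.sqrt (∑ i, ∑ j, (A i j) ^ 2)

open InnerProductSpace in
theorem exists_proj_family {n m : ℕ} (c : Fin m → EuclideanSpace ℝ (Fin n)) :
    ∃ e : Fin m → EuclideanSpace ℝ (Fin n), ∀ x, ∀ s ∈ Submodule.span ℝ (Set.range c),
      ‖x - ∑ k, (inner ℝ (e k) x) • e k‖ ^ 2 ≤ ‖x - s‖ ^ 2 := by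
  refine ⟨gramSchmidtNormed ℝ c, fun x s hs => ?_⟩
  rw [← span_gramSchmidt ℝ c, ← span_gramSchmidtNormed_range c] at hs
  set e := gramSchmidtNormed ℝ c with he
  have horth : ∀ i j, i ≠ j → inner ℝ (e i) (e j) = 0 := by
    intro i j hij
    simp [he, gramSchmidtNormed, inner_smul_left, inner_smul_right,
      gramSchmidt_orthogonal ℝ c hij]
  have hunit : ∀ j, inner ℝ (e j) (e j) • e j = e j := by
    intro j
    by_cases h : e j = 0
    · simp [h]
    · have := gramSchmidtNormed_unit_length' (𝕜 := ℝ) (f := c) (n := j) h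
      rw [real_inner_self_eq_norm_sq, this]; simp
  set p := ∑ k, (inner ℝ (e k) x) • e k with hp
  have hperp : ∀ j, inner ℝ (e j) (x - p) = 0 := by
    intro j
    rw [inner_sub_right, hp, inner_sum, Finset.sum_eq_single j]
    · rw [inner_smul_right]
      have := congrArg (fun v => inner ℝ v x) (hunit j)
      simp only [real_inner_smul_left] at this
      linarith
    · intro b _ hb
      rw [inner_smul_right, horth _ _ hb.symm, mul_zero]
    · simp
  have hS : ∀ v ∈ Submodule.span ℝ (Set.range e), inner ℝ v (x - p) = 0 := by
    intro v hv
    induction hv using Submodule.span_induction with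
    | mem v h => obtain ⟨j, rfl⟩ := h; exact hperp j
    | zero => simp
    | add a b _ _ ha hb => rw [inner_add_left, ha, hb, add_zero]
    | smul r a _ ha => rw [inner_smul_left, ha, mul_zero]
  have hpS : p ∈ Submodule.span ℝ (Set.range e) :=
    Submodule.sum_mem _ fun k _ => Submodule.smul_mem _ _ (Submodule.subset_span ⟨k, rfl⟩)
  have h0 := hS _ (Submodule.sub_mem _ hpS hs)
  have h1 : x - s = (p - s) + (x - p) := by abel
  rw [h1, @norm_add_sq_real, h0]
  nlinarith [sq_nonneg ‖p - s‖]

theorem frob_sq {p q : ℕ} (A : Matrix (Fin p) (Fin q) ℝ) :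
    frobeniusNorm A ^ 2 = ∑ j, ‖(WithLp.toLp 2 (fun i => A i j) : EuclideanSpace ℝ (Fin p))‖ ^ 2 := by
  rw [frobeniusNorm, Real.sq_sqrt (by positivity), Finset.sum_comm]
  simp [EuclideanSpace.norm_sq_eq]

theorem key {n N m : ℕ} (X : Matrix (Fin n) (Fin N) ℝ) (W₂ : Matrix (Fin n) (Fin m) ℝ) :
    ∃ W : Matrix (Fin n) (Fin m) ℝ, ∀ W₁ : Matrix (Fin m) (Fin n) ℝ,
      frobeniusNorm (X - W * Wᵀ * X) ^ 2 ≤ frobeniusNorm (X - W₂ * W₁ * X) ^ 2 := by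
  obtain ⟨e, he⟩ := exists_proj_family
    (fun k => (WithLp.toLp 2 (fun i => W₂ i k) : EuclideanSpace ℝ (Fin n)))
  refine ⟨Matrix.of fun i k => e k i, fun W₁ => ?_⟩
  rw [frob_sq, frob_sq]
  refine Finset.sum_le_sum fun j _ => ?_
  have h := he (WithLp.toLp 2 fun i => X i j)
    (∑ k, ((W₁ * X) k j) • (WithLp.toLp 2 (fun i => W₂ i k) : EuclideanSpace ℝ (Fin n)))
    (Submodule.sum_mem _ fun k _ => Submodule.smul_mem _ _ (Submodule.subset_span ⟨k, rfl⟩))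
  refine le_of_eq_of_le ?_ (h.trans_eq ?_)
  · congr 2
    ext i
    rw [Matrix.mul_assoc]
    simp [Matrix.mul_apply, PiLp.inner_apply, mul_comm]
  · congr 2
    ext i
    rw [Matrix.mul_assoc]
    simp [Matrix.mul_apply (M := W₂), mul_comm]

/-- The infimum of the PCA-style symmetric autoencoder loss `‖X - W Wᵀ X‖_F²`
over all `n × m` matrices `W` equals the infimum of the linear autoencoder loss
`‖X - W₂ W₁ X‖_F²` over all pairs of an `n × m` matrix `W₂` and an `m × n`
matrix `W₁`. -/
theorem pca_loss_eq_linear_autoencoder_loss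
    (n N m : ℕ) (hn : 0 < n) (hN : 0 < N) (hm : 0 < m)
    (X : Matrix (Fin n) (Fin N) ℝ) :
    (⨅ W : Matrix (Fin n) (Fin m) ℝ, frobeniusNorm (X - W * Wᵀ * X) ^ 2) =
      ⨅ W₂ : Matrix (Fin n) (Fin m) ℝ, ⨅ W₁ : Matrix (Fin m) (Fin n) ℝ,
        frobeniusNorm (X - W₂ * W₁ * X) ^ 2 := by
  apply le_antisymm
  · refine le_ciInf fun W₂ => le_ciInf fun W₁ => ?_
    obtain ⟨W, hW⟩ := key X W₂
    exact (ciInf_le ⟨0, by rintro _ ⟨_, rfl⟩; positivity⟩ W).trans (hW W₁)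
  · refine le_ciInf fun W => ?_
    refine (ciInf_le ⟨0, ?_⟩ W).trans (ciInf_le ⟨0, ?_⟩ Wᵀ)
    · rintro _ ⟨_, rfl⟩
      exact Real.iInf_nonneg fun _ => by positivity
    · rintro _ ⟨_, rfl⟩; positivity
end

section
/- Let W be an n×m real matrix with Wᵀ W invertible, and let λ > 0 be such that there exists a nonzero vector x ∈ ℝ^m with ‖W x‖ ≤ λ ‖x‖ (so λ is at least the smallest singular value of W). If λ · ‖W‖₂ < 1 (in particular, if the product of the largest and smallest singular values of W is less than 1), then ‖W‖₂ < ‖(Wᵀ W)⁻¹ Wᵀ‖₂; that is, the optimal linear encoder (Wᵀ W)⁻¹ Wᵀ has strictly larger operator norm than the decoder W. -/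
open Matrix BigOperators

/-- The Euclidean norm of a vector in `ℝ^k`. -/
noncomputable def euclNorm {k : ℕ} (v : Fin k → ℝ) : ℝ :=
  Real.sqrt (∑ i, (v i) ^ 2)

/-- The L2 operator norm of a real matrix: the operator norm of the induced
linear map between Euclidean spaces. -/
noncomputable def l2OpNorm {p q : ℕ} (A : Matrix (Fin p) (Fin q) ℝ) : ℝ :=
  ‖LinearMap.toContinuousLinearMap (Matrix.toEuclideanLin A)‖

theorem euclNorm_eq_norm_aux {k : ℕ} (v : Fin k → ℝ) : euclNorm v = ‖WithLp.toLp 2 v‖ := by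
  simp [euclNorm, EuclideanSpace.norm_eq]

theorem euclNorm_mulVec_le_aux {p q : ℕ} (A : Matrix (Fin p) (Fin q) ℝ) (v : Fin q → ℝ) :
    euclNorm (A.mulVec v) ≤ l2OpNorm A * euclNorm v := by
  rw [euclNorm_eq_norm_aux, euclNorm_eq_norm_aux]
  exact (LinearMap.toContinuousLinearMap (Matrix.toEuclideanLin A)).le_opNorm (WithLp.toLp 2 v)

/-- If `Wᵀ W` is invertible, `λ > 0` is at least the smallest singular value of
`W` (witnessed by a nonzero `x` with `‖W x‖ ≤ λ ‖x‖`), and `λ ⬝ ‖W‖₂ < 1`, then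
the optimal linear encoder `(Wᵀ W)⁻¹ Wᵀ` has strictly larger operator norm than
the decoder `W`. -/
theorem encoder_opNorm_gt_decoder
    (n m : ℕ) (W : Matrix (Fin n) (Fin m) ℝ) (hinv : IsUnit (Wᵀ * W))
    (lam : ℝ) (hlam : 0 < lam)
    (hx : ∃ x : Fin m → ℝ, x ≠ 0 ∧ euclNorm (W.mulVec x) ≤ lam * euclNorm x)
    (hsmall : lam * l2OpNorm W < 1) :
    l2OpNorm W < l2OpNorm ((Wᵀ * W)⁻¹ * Wᵀ) := by
  obtain ⟨x, hx0, hx⟩ := hx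
  have hdet : IsUnit (Wᵀ * W).det := (Matrix.isUnit_iff_isUnit_det _).1 hinv
  have hE : ((Wᵀ * W)⁻¹ * Wᵀ).mulVec (W.mulVec x) = x := by
    rw [Matrix.mulVec_mulVec, Matrix.mul_assoc, Matrix.nonsing_inv_mul _ hdet, Matrix.one_mulVec]
  have h1 := euclNorm_mulVec_le_aux ((Wᵀ * W)⁻¹ * Wᵀ) (W.mulVec x)
  rw [hE] at h1
  have hpos : 0 < euclNorm x := by
    rw [euclNorm_eq_norm_aux, norm_pos_iff]
    intro h
    exact hx0 (by simpa using h)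
  have hEn : 0 ≤ l2OpNorm ((Wᵀ * W)⁻¹ * Wᵀ) := norm_nonneg _
  have h2 := h1.trans (mul_le_mul_of_nonneg_left hx hEn)
  have h3 : 1 ≤ lam * l2OpNorm ((Wᵀ * W)⁻¹ * Wᵀ) := by
    refine le_of_mul_le_mul_right ?_ hpos
    linarith
  exact lt_of_mul_lt_mul_left (hsmall.trans_le h3) hlam.le
end

section
/- Let W_d be an n×m real matrix with W_dᵀ W_d invertible, and let W_e be an m×n real matrix. If the reconstruction matrix P = W_d W_e is symmetric (Pᵀ = P), idempotent (P P = P), and has rank m — i.e., P is the orthogonal projector onto the m-dimensional column space of W_d — then W_e = (W_dᵀ W_d)⁻¹ W_dᵀ. In other words, the only linear encoder that together with the decoder W_d realizes an orthogonal rank-m projection (as required to recover the principal components) is the pseudoinverse of W_d. -/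
open Matrix

/-- If the decoder `W_d` has invertible Gram matrix `W_dᵀ W_d` and the
reconstruction matrix `W_d W_e` is symmetric, idempotent and of rank `m`
(i.e. it is the orthogonal projector onto the `m`-dimensional column space of
`W_d`), then the encoder must be the pseudoinverse `(W_dᵀ W_d)⁻¹ W_dᵀ`. -/
theorem encoder_eq_pseudoinverse_of_orthogonal_projection
    (n m : ℕ) (Wd : Matrix (Fin n) (Fin m) ℝ) (hinv : IsUnit (Wdᵀ * Wd))
    (We : Matrix (Fin m) (Fin n) ℝ)
    (hsymm : (Wd * We)ᵀ = Wd * We)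
    (hidem : (Wd * We) * (Wd * We) = Wd * We)
    (hrank : (Wd * We).rank = m) :
    We = (Wdᵀ * Wd)⁻¹ * Wdᵀ := by
  have hdet : IsUnit (Wdᵀ * Wd).det := (Matrix.isUnit_iff_isUnit_det _).1 hinv
  have cancel : ∀ X Y : Matrix (Fin m) (Fin n) ℝ, Wd * X = Wd * Y → X = Y := by
    intro X Y h
    have h2 : (Wdᵀ * Wd) * X = (Wdᵀ * Wd) * Y := by
      rw [Matrix.mul_assoc, h, Matrix.mul_assoc]
    have h3 := congrArg (fun Z => (Wdᵀ * Wd)⁻¹ * Z) h2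
    simpa only [Matrix.nonsing_inv_mul_cancel_left _ _ hdet] using h3
  have h1 : We * Wd * We = We := by
    apply cancel
    simpa only [Matrix.mul_assoc] using hidem
  have hr : (We * Weᵀ).rank = m := by
    rw [Matrix.rank_self_mul_transpose]
    apply le_antisymm
    · simpa using We.rank_le_card_height
    · have := Matrix.rank_mul_le_right Wd We
      omega
  have hu : IsUnit (We * Weᵀ) := by
    rw [← Matrix.mulVec_surjective_iff_isUnit]
    have htop : LinearMap.range (We * Weᵀ).mulVecLin = ⊤ := by
      apply Submodule.eq_top_of_finrank_eq
      rw [Module.finrank_fin_fun]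
      exact hr
    exact LinearMap.range_eq_top.1 htop
  have h2 : We * Wd = 1 := by
    apply hu.mul_right_cancel
    rw [← Matrix.mul_assoc, h1, Matrix.one_mul]
  have h3 : Wdᵀ * Wd * We = Wdᵀ := by
    rw [Matrix.mul_assoc, ← hsymm, ← Matrix.transpose_mul, Matrix.mul_assoc, h2, Matrix.mul_one]
  calc We = (Wdᵀ * Wd)⁻¹ * (Wdᵀ * Wd * We) :=
        (Matrix.nonsing_inv_mul_cancel_left _ _ hdet).symm
    _ = _ := by rw [h3]
end
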